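/- Let D ≥ 2, let A be a real symmetric positive definite D×D matrix, let N ∈ ℝ^D with ‖N‖ = 1, let d₀ > 0, and let s > 0. Then the ellipsoid {y ∈ ℝ^D : yᵀA⁻¹y = 2s²} has nonempty intersection with the hyperplane {y ∈ ℝ^D : Nᵀy = d₀} if and only if s ≥ d₀/√(2 NᵀA N). In particular, the smallest such s (the tangent-ellipsoid radius of the Walk on Ellipsoids method under the half-space approximation) is r̂ = d₀/√(2 NᵀA N). -/

import Mathlib

open Matrix

/-!
A factorization `A = BᵀB` with `B` invertible and the substitution `y = Bᵀz` turn the ellipsoid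
`yᵀA⁻¹y = r²` into the sphere `‖z‖ = r` and the hyperplane `nᵀy = d` into `⟪Bn, z⟫ = d`, where
`‖Bn‖² = nᵀAn`. In dimension at least two a sphere is connected, so on it the linear functional
`⟪v, ·⟫` takes exactly the values between the Cauchy–Schwarz bounds `±r‖v‖`.
-/

section Sphere

variable {E : Type*} [NormedAddCommGroup E] [InnerProductSpace ℝ E]

theorem exists_mem_sphere_inner_eq_mul_norm [Nontrivial E] (v : E) {r : ℝ} (hr : 0 ≤ r) :
    ∃ x ∈ Metric.sphere (0 : E) r, inner ℝ v x = r * ‖v‖ := by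
  rcases eq_or_ne v 0 with rfl | hv
  · obtain ⟨x, hx⟩ := NormedSpace.sphere_nonempty (x := (0 : E)).2 hr
    exact ⟨x, hx, by simp⟩
  · have hv' : ‖v‖ ≠ 0 := norm_ne_zero_iff.2 hv
    refine ⟨(r / ‖v‖) • v, ?_, ?_⟩
    · simp [norm_smul, abs_of_nonneg hr, hv']
    · rw [real_inner_smul_right, real_inner_self_eq_norm_sq]
      field_simp

theorem image_inner_sphere (hE : 1 < Module.rank ℝ E) (v : E) {r : ℝ} (hr : 0 ≤ r) :
    inner ℝ v '' Metric.sphere 0 r = Set.Icc (-(r * ‖v‖)) (r * ‖v‖) := by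
  apply Set.Subset.antisymm
  · rintro _ ⟨x, hx, rfl⟩
    rw [mem_sphere_zero_iff_norm] at hx
    rw [Set.mem_Icc, ← abs_le, mul_comm, ← hx]
    exact abs_real_inner_le_norm v x
  · have : Nontrivial E := rank_pos_iff_nontrivial.1 (zero_lt_one.trans hE)
    obtain ⟨x, hx, hvx⟩ := exists_mem_sphere_inner_eq_mul_norm v hr
    have hx' : -x ∈ Metric.sphere (0 : E) r := by simpa using hx
    rw [← hvx, ← inner_neg_right]
    exact (isPreconnected_sphere hE 0 r).intermediate_value hx' hx
      (continuous_const.inner continuous_id).continuousOn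

end Sphere

section Ellipsoid

variable {ι : Type*} [Fintype ι]

theorem exists_dotProduct_self_eq_sq_and_dotProduct_eq_iff [Nontrivial ι] (v : ι → ℝ) (d : ℝ)
    {r : ℝ} (hr : 0 ≤ r) :
    (∃ z : ι → ℝ, z ⬝ᵥ z = r ^ 2 ∧ v ⬝ᵥ z = d) ↔ |d| ≤ r * √(v ⬝ᵥ v) := by
  have hrank : 1 < Module.rank ℝ (EuclideanSpace ℝ ι) := by
    rw [← Module.finrank_eq_rank, finrank_euclideanSpace]
    exact_mod_cast Fintype.one_lt_card
  have inner_eq (x y : ι → ℝ) : inner ℝ (WithLp.toLp 2 x) (WithLp.toLp 2 y) = x ⬝ᵥ y := by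
    rw [EuclideanSpace.inner_toLp_toLp, star_trivial, dotProduct_comm]
  have norm_eq (x : ι → ℝ) : ‖WithLp.toLp 2 x‖ = √(x ⬝ᵥ x) := by
    rw [norm_eq_sqrt_real_inner, inner_eq]
  rw [abs_le, ← Set.mem_Icc, ← norm_eq, ← image_inner_sphere hrank _ hr, Set.mem_image,
    (WithLp.toLp_surjective 2).exists]
  refine exists_congr fun z => and_congr ?_ (by rw [inner_eq])
  rw [mem_sphere_zero_iff_norm, ← sq_eq_sq₀ (norm_nonneg _) hr, ← real_inner_self_eq_norm_sq,
    inner_eq]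

variable [DecidableEq ι]

theorem vecMul_dotProduct_inv_transpose_mul_self_mulVec {R : Type*} [CommRing R]
    {B : Matrix ι ι R} (hB : IsUnit B) (z : ι → R) :
    (z ᵥ* B) ⬝ᵥ (Bᵀ * B)⁻¹ *ᵥ (z ᵥ* B) = z ⬝ᵥ z := by
  have hdet : IsUnit B.det := B.isUnit_iff_isUnit_det.1 hB
  rw [← mulVec_transpose, mulVec_mulVec, Matrix.mul_inv_rev, Matrix.mul_assoc,
    nonsing_inv_mul _ (isUnit_det_transpose B hdet), Matrix.mul_one, mulVec_transpose,
    ← dotProduct_mulVec, mulVec_mulVec, mul_nonsing_inv _ hdet, one_mulVec]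

open scoped ComplexOrder MatrixOrder in
theorem exists_isUnit_eq_conjTranspose_mul_self_of_posDef {𝕜 : Type*} [RCLike 𝕜]
    {A : Matrix ι ι 𝕜} (hA : A.PosDef) : ∃ B : Matrix ι ι 𝕜, IsUnit B ∧ A = Bᴴ * B := by
  obtain ⟨B, rfl⟩ := CStarAlgebra.nonneg_iff_eq_star_mul_self.1 hA.posSemidef.nonneg
  exact ⟨B, isUnit_of_mul_isUnit_right hA.isUnit, by rw [star_eq_conjTranspose]⟩

theorem exists_dotProduct_inv_mulVec_eq_sq_and_dotProduct_eq_iff [Nontrivial ι]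
    {A : Matrix ι ι ℝ} (hA : A.PosDef) (n : ι → ℝ) (d : ℝ) {r : ℝ} (hr : 0 ≤ r) :
    (∃ y : ι → ℝ, y ⬝ᵥ A⁻¹ *ᵥ y = r ^ 2 ∧ n ⬝ᵥ y = d) ↔ |d| ≤ r * √(n ⬝ᵥ A *ᵥ n) := by
  obtain ⟨B, hB, rfl⟩ := exists_isUnit_eq_conjTranspose_mul_self_of_posDef hA
  rw [conjTranspose_eq_transpose_of_trivial]
  have functional_eq (z : ι → ℝ) : n ⬝ᵥ (z ᵥ* B) = (B *ᵥ n) ⬝ᵥ z := by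
    rw [dotProduct_comm, ← dotProduct_mulVec, dotProduct_comm]
  have normSq_eq : n ⬝ᵥ (Bᵀ * B) *ᵥ n = (B *ᵥ n) ⬝ᵥ (B *ᵥ n) := by
    rw [← mulVec_mulVec, dotProduct_transpose_mulVec]
  rw [(vecMul_surjective_iff_isUnit.2 hB).exists, normSq_eq]
  simp only [vecMul_dotProduct_inv_transpose_mul_self_mulVec hB, functional_eq]
  exact exists_dotProduct_self_eq_sq_and_dotProduct_eq_iff (B *ᵥ n) d hr

theorem stmt_8_general [Nontrivial ι] {A : Matrix ι ι ℝ} (hA : A.PosDef) {n : ι → ℝ} (hn : n ≠ 0)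
    (d s : ℝ) :
    (∃ y : ι → ℝ, y ⬝ᵥ A⁻¹ *ᵥ y = 2 * s ^ 2 ∧ n ⬝ᵥ y = d) ↔
      |d| / √(2 * (n ⬝ᵥ A *ᵥ n)) ≤ |s| := by
  have hq : 0 < n ⬝ᵥ A *ᵥ n := by simpa using hA.dotProduct_mulVec_pos hn
  have hr : 2 * s ^ 2 = (√2 * |s|) ^ 2 := by
    rw [mul_pow, Real.sq_sqrt zero_le_two, sq_abs]
  rw [hr, exists_dotProduct_inv_mulVec_eq_sq_and_dotProduct_eq_iff hA n d (by positivity),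
    div_le_iff₀ (by positivity), Real.sqrt_mul zero_le_two, mul_left_comm, mul_assoc]

end Ellipsoid

/-- Half-space computation of the tangent-ellipsoid radius in the Walk on
Ellipsoids method: the ellipsoid `{y : yᵀA⁻¹y = 2s²}` meets the hyperplane
`{y : Nᵀy = d₀}` iff `s ≥ d₀/√(2 NᵀAN)`. -/
theorem stmt_8 (D : ℕ) (hD : 2 ≤ D)
    (A : Matrix (Fin D) (Fin D) ℝ) (hA : A.PosDef)
    (N : EuclideanSpace ℝ (Fin D)) (hN : ‖N‖ = 1)
    (d₀ : ℝ) (hd₀ : 0 < d₀) (s : ℝ) (hs : 0 < s) :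
    (∃ y : Fin D → ℝ, y ⬝ᵥ A⁻¹.mulVec y = 2 * s ^ 2 ∧ N ⬝ᵥ y = d₀) ↔
      d₀ / Real.sqrt (2 * (N ⬝ᵥ A.mulVec N)) ≤ s := by
  have : Nontrivial (Fin D) := Fin.nontrivial_iff_two_le.2 hD
  have hN0 : N.ofLp ≠ 0 := fun h => by simp [(WithLp.ofLp_eq_zero 2).1 h] at hN
  simpa only [abs_of_pos hd₀, abs_of_pos hs] using stmt_8_general hA hN0 d₀ s
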